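/- Let P and P̂ be two dynamics, π_D and π two policies, ε_π := sup_{s∈S} D_TV(π_D(·|s), π(·|s)), and ε_t^m := E_{(s,a)∼ν_{t-1}^{π,P̂}}[D_TV(P̂(·|s,a), P(·|s,a))] for t ≥ 1. Writing C(P̂,π) := (2·R_max/(1−γ)²)·((2−γ)·ε_π + (1−γ)·Σ_{t=1}^∞ γ^t·ε_t^m), the true return is lower-bounded by the model return minus the error term: J_P(π) ≥ J_{P̂}(π) − C(P̂,π). -/

import Mathlib

open scoped ENNReal

noncomputable section

/-- Total variation distance between two probability mass functions on a countable type: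
`D_TV(p, q) = (1/2) * Σ_x |p(x) - q(x)|`. -/
def tv {X : Type*} (p q : PMF X) : ℝ :=
  (1 / 2) * ∑' x : X, |(p x).toReal - (q x).toReal|

/-- The state-action distribution at time `t` under initial distribution `ρ0`, policy `π`
and dynamics `P`:  `ν_0(s,a) = ρ0(s)·π(a|s)` and
`ν_{t+1}(s',a') = Σ_{s,a} ν_t(s,a)·P(s'|s,a)·π(a'|s')`. -/
def nu {S A : Type*} (ρ0 : PMF S) (π : S → PMF A) (P : S × A → PMF S) : ℕ → PMF (S × A)
  | 0 => ρ0.bind fun s => (π s).map fun a => (s, a)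
  | (t + 1) => (nu ρ0 π P t).bind fun sa =>
      (P sa).bind fun s' => (π s').map fun a' => (s', a')

/-- The discounted return `J_P(π) = Σ_{t=0}^∞ γ^t · E_{(s,a)∼ν_t^{π,P}}[R(s,a)]`. -/
def J {S A : Type*} (R : S × A → ℝ) (γ : ℝ) (ρ0 : PMF S) (π : S → PMF A)
    (P : S × A → PMF S) : ℝ :=
  ∑' t : ℕ, γ ^ t * ∑' sa : S × A, ((nu ρ0 π P t) sa).toReal * R sa

/-! One step of the two dynamics under the common policy increases the total variation distance
between the state-action distributions by at most the expected model error, since drawing an action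
is a data-processing step. The distances vanish at time `0`, so their discounted sum `D` and the
discounted sum `E` of the model errors satisfy `D ≤ E + γ * D`. A reward bounded by `Rmax` turns a
distance `δ` into a gap of at most `2 * Rmax * δ` in expected reward, hence the two returns differ
by at most `2 * Rmax * D ≤ 2 * Rmax / (1 - γ) * E`. -/

/-- The expectation of a real-valued function under a probability mass function, written as the
series that appears in `J`; junk value `0` when the series is not absolutely summable. -/
def expect {X : Type*} (p : PMF X) (f : X → ℝ) : ℝ :=
  ∑' x, (p x).toReal * f x

section Expectation

variable {X : Type*}

theorem hasSum_toReal_one (p : PMF X) : HasSum (fun x => (p x).toReal) 1 := by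
  simpa [← ENNReal.tsum_toReal_eq p.apply_ne_top] using ENNReal.hasSum_toReal p.tsum_coe_ne_top

theorem abs_toReal_mul_le (p : PMF X) {f : X → ℝ} {M : ℝ} (hf : ∀ x, |f x| ≤ M) (x : X) :
    |(p x).toReal * f x| ≤ (p x).toReal * M := by
  rw [abs_mul, abs_of_nonneg ENNReal.toReal_nonneg]
  exact mul_le_mul_of_nonneg_left (hf x) ENNReal.toReal_nonneg

theorem summable_toReal_mul (p : PMF X) {f : X → ℝ} {M : ℝ} (hf : ∀ x, |f x| ≤ M) :
    Summable fun x => (p x).toReal * f x :=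
  .of_norm_bounded ((hasSum_toReal_one p).summable.mul_right M) (abs_toReal_mul_le p hf)

theorem abs_expect_le (p : PMF X) {f : X → ℝ} {M : ℝ} (hf : ∀ x, |f x| ≤ M) :
    |expect p f| ≤ M := by
  simpa [expect] using tsum_of_norm_bounded (f := fun x => (p x).toReal * f x)
    ((hasSum_toReal_one p).mul_right M) (abs_toReal_mul_le p hf)

theorem expect_nonneg (p : PMF X) {f : X → ℝ} (hf : ∀ x, 0 ≤ f x) : 0 ≤ expect p f :=
  tsum_nonneg fun x => mul_nonneg ENNReal.toReal_nonneg (hf x)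

theorem expect_mono (p : PMF X) {f g : X → ℝ} (hf : Summable fun x => (p x).toReal * f x)
    (hg : Summable fun x => (p x).toReal * g x) (hfg : ∀ x, f x ≤ g x) :
    expect p f ≤ expect p g :=
  hf.tsum_le_tsum (fun x => mul_le_mul_of_nonneg_left (hfg x) ENNReal.toReal_nonneg) hg

theorem ofReal_expect (p : PMF X) {f : X → ℝ} (hf₀ : ∀ x, 0 ≤ f x)
    (hf : Summable fun x => (p x).toReal * f x) :
    ENNReal.ofReal (expect p f) = ∑' x, p x * ENNReal.ofReal (f x) := by
  rw [expect, ENNReal.ofReal_tsum_of_nonneg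
    (fun x => mul_nonneg ENNReal.toReal_nonneg (hf₀ x)) hf]
  simp [ENNReal.ofReal_mul, ENNReal.ofReal_toReal (p.apply_ne_top _)]

end Expectation

section TotalVariation

variable {X Y : Type*}

theorem summable_abs_toReal_sub (p q : PMF X) :
    Summable fun x => |(p x).toReal - (q x).toReal| :=
  ((hasSum_toReal_one p).summable.sub (hasSum_toReal_one q).summable).abs

theorem abs_expect_sub_expect_le (p q : PMF X) {f : X → ℝ} {M : ℝ} (hf : ∀ x, |f x| ≤ M) :
    |expect p f - expect q f| ≤ 2 * M * tv p q := by
  have hbound (x : X) : ‖(p x).toReal * f x - (q x).toReal * f x‖ ≤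
      |(p x).toReal - (q x).toReal| * M := by
    rw [← sub_mul, Real.norm_eq_abs, abs_mul]
    exact mul_le_mul_of_nonneg_left (hf x) (abs_nonneg _)
  calc |expect p f - expect q f|
      = ‖∑' x, ((p x).toReal * f x - (q x).toReal * f x)‖ := by
        rw [(summable_toReal_mul p hf).tsum_sub (summable_toReal_mul q hf), Real.norm_eq_abs,
          expect, expect]
    _ ≤ (∑' x, |(p x).toReal - (q x).toReal|) * M :=
        tsum_of_norm_bounded ((summable_abs_toReal_sub p q).hasSum.mul_right M) hbound
    _ = 2 * M * tv p q := by rw [tv]; ring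

theorem ofReal_abs_toReal_sub {a b : ℝ≥0∞} (ha : a ≠ ∞) (hb : b ≠ ∞) :
    ENNReal.ofReal |a.toReal - b.toReal| = (a - b) + (b - a) := by
  wlog h : b ≤ a generalizing a b
  · rw [abs_sub_comm, add_comm, this hb ha (le_of_not_ge h)]
  · rw [abs_of_nonneg (sub_nonneg.2 (ENNReal.toReal_mono ha h)), tsub_eq_zero_of_le h, add_zero,
      ← ENNReal.toReal_sub_of_le h ha, ENNReal.ofReal_toReal (ENNReal.sub_ne_top ha)]

theorem tsum_tsub_comm (p q : PMF X) : ∑' x, (p x - q x) = ∑' x, (q x - p x) := by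
  have htsub_add_one (p q : PMF X) : ∑' x, (p x - q x) + 1 = ∑' x, max (p x) (q x) := by
    simp only [← q.tsum_coe, ← ENNReal.tsum_add, tsub_add_eq_max]
  refine (ENNReal.add_left_inj ENNReal.one_ne_top).1 ?_
  simp only [htsub_add_one, max_comm]

-- Truncated subtraction in `ℝ≥0∞` keeps only the excess of `p` over `q`, which is half of the
-- `ℓ¹` distance because both have mass one.
theorem ofReal_tv (p q : PMF X) : ENNReal.ofReal (tv p q) = ∑' x, (p x - q x) := by
  have htwo : 2 * ENNReal.ofReal (tv p q) = 2 * ∑' x, (p x - q x) := by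
    calc 2 * ENNReal.ofReal (tv p q)
        = ENNReal.ofReal (∑' x, |(p x).toReal - (q x).toReal|) := by
          rw [← ENNReal.ofReal_ofNat 2, ← ENNReal.ofReal_mul zero_le_two, tv]; ring_nf
      _ = ∑' x, ((p x - q x) + (q x - p x)) := by
          rw [ENNReal.ofReal_tsum_of_nonneg (fun _ => abs_nonneg _) (summable_abs_toReal_sub p q)]
          exact tsum_congr fun x => ofReal_abs_toReal_sub (p.apply_ne_top x) (q.apply_ne_top x)
      _ = 2 * ∑' x, (p x - q x) := by
          rw [ENNReal.tsum_add, tsum_tsub_comm q p, two_mul]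
  exact (ENNReal.mul_right_inj two_ne_zero ENNReal.ofNat_ne_top).1 htwo

theorem tv_nonneg (p q : PMF X) : 0 ≤ tv p q :=
  mul_nonneg (by norm_num) (tsum_nonneg fun _ => abs_nonneg _)

theorem tv_le_one (p q : PMF X) : tv p q ≤ 1 := by
  rw [← ENNReal.ofReal_le_one, ofReal_tv, ← p.tsum_coe]
  exact ENNReal.tsum_le_tsum fun _ => tsub_le_self

theorem abs_tv_le_one (p q : PMF X) : |tv p q| ≤ 1 := by
  rw [abs_of_nonneg (tv_nonneg p q)]
  exact tv_le_one p q

theorem tv_self (p : PMF X) : tv p p = 0 := by simp [tv]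

theorem tsum_tsub_tsum_le (f g : X → ℝ≥0∞) : ∑' x, f x - ∑' x, g x ≤ ∑' x, (f x - g x) := by
  rw [tsub_le_iff_right, ← ENNReal.tsum_add]
  exact ENNReal.tsum_le_tsum fun _ => le_tsub_add

theorem mul_tsub_mul_le (a b c d : ℝ≥0∞) : a * b - c * d ≤ a * (b - d) + (a - c) * d := by
  rw [tsub_le_iff_right]
  calc a * b ≤ a * ((b - d) + d) := by gcongr; exact le_tsub_add
    _ = a * (b - d) + a * d := mul_add _ _ _
    _ ≤ a * (b - d) + ((a - c) + c) * d := by gcongr; exact le_tsub_add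
    _ = a * (b - d) + (a - c) * d + c * d := by ring

theorem tv_bind_le (p q : PMF X) (f g : X → PMF Y) :
    tv (p.bind f) (q.bind g) ≤ expect p (fun x => tv (f x) (g x)) + tv p q := by
  have hE : 0 ≤ expect p fun x => tv (f x) (g x) := expect_nonneg p fun x => tv_nonneg _ _
  rw [← ENNReal.ofReal_le_ofReal_iff (add_nonneg hE (tv_nonneg p q)),
    ENNReal.ofReal_add hE (tv_nonneg p q), ofReal_expect p (fun x => tv_nonneg _ _)
      (summable_toReal_mul p fun x => abs_tv_le_one _ _)]
  simp only [ofReal_tv, PMF.bind_apply]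
  calc ∑' y, (∑' x, p x * f x y - ∑' x, q x * g x y)
      ≤ ∑' y, ∑' x, (p x * (f x y - g x y) + (p x - q x) * g x y) :=
        ENNReal.tsum_le_tsum fun y => (tsum_tsub_tsum_le _ _).trans
          (ENNReal.tsum_le_tsum fun x => mul_tsub_mul_le _ _ _ _)
    _ = ∑' x, ∑' y, (p x * (f x y - g x y) + (p x - q x) * g x y) := ENNReal.tsum_comm
    _ = ∑' x, p x * ∑' y, (f x y - g x y) + ∑' x, (p x - q x) := by
        simp only [ENNReal.tsum_add, ENNReal.tsum_mul_left, PMF.tsum_coe, mul_one]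

theorem tv_bind_right_le (p q : PMF X) (f : X → PMF Y) :
    tv (p.bind f) (q.bind f) ≤ tv p q := by
  simpa [tv_self, expect] using tv_bind_le p q f f

end TotalVariation

section Discounting

variable {γ : ℝ}

theorem summable_pow_mul (hγ0 : 0 ≤ γ) (hγ1 : γ < 1) {f : ℕ → ℝ} {M : ℝ}
    (hf : ∀ t, |f t| ≤ M) : Summable fun t => γ ^ t * f t := by
  refine .of_norm_bounded ((summable_geometric_of_lt_one hγ0 hγ1).mul_right M) fun t => ?_
  rw [Real.norm_eq_abs, abs_mul, abs_of_nonneg (pow_nonneg hγ0 t)]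
  exact mul_le_mul_of_nonneg_left (hf t) (pow_nonneg hγ0 t)

theorem one_sub_mul_tsum_pow_mul_le (hγ0 : 0 ≤ γ) {d e : ℕ → ℝ}
    (hd : Summable fun t => γ ^ t * d t) (he : Summable fun t => γ ^ (t + 1) * e t)
    (hde : ∀ t, d (t + 1) ≤ e t + d t) :
    (1 - γ) * ∑' t, γ ^ t * d t ≤ d 0 + ∑' t, γ ^ (t + 1) * e t := by
  have hshift (t : ℕ) : γ ^ (t + 1) * d (t + 1) ≤ γ ^ (t + 1) * e t + γ * (γ ^ t * d t) :=
    calc γ ^ (t + 1) * d (t + 1) ≤ γ ^ (t + 1) * (e t + d t) :=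
          mul_le_mul_of_nonneg_left (hde t) (pow_nonneg hγ0 _)
      _ = γ ^ (t + 1) * e t + γ * (γ ^ t * d t) := by ring
  have hrec : ∑' t, γ ^ t * d t ≤
      d 0 + (∑' t, γ ^ (t + 1) * e t + γ * ∑' t, γ ^ t * d t) :=
    calc ∑' t, γ ^ t * d t = d 0 + ∑' t, γ ^ (t + 1) * d (t + 1) := by
          rw [hd.tsum_eq_zero_add, pow_zero, one_mul]
      _ ≤ d 0 + ∑' t, (γ ^ (t + 1) * e t + γ * (γ ^ t * d t)) := by
          gcongr
          exacts [(summable_nat_add_iff 1).2 hd, he.add (hd.mul_left γ), hshift _]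
      _ = d 0 + (∑' t, γ ^ (t + 1) * e t + γ * ∑' t, γ ^ t * d t) := by
          rw [he.tsum_add (hd.mul_left γ), tsum_mul_left]
  linarith

end Discounting

section ModelError

variable {S A : Type*} {R : S × A → ℝ} {Rmax γ : ℝ}

theorem abs_J_sub_J_le (hR : ∀ sa, |R sa| ≤ Rmax) (hγ0 : 0 ≤ γ) (hγ1 : γ < 1) (ρ ρ' : PMF S)
    (π π' : S → PMF A) (P P' : S × A → PMF S) :
    |J R γ ρ π P - J R γ ρ' π' P'| ≤
      2 * Rmax * ∑' t, γ ^ t * tv (nu ρ π P t) (nu ρ' π' P' t) := by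
  have hgap (t : ℕ) :
      ‖γ ^ t * expect (nu ρ π P t) R - γ ^ t * expect (nu ρ' π' P' t) R‖ ≤
        2 * Rmax * (γ ^ t * tv (nu ρ π P t) (nu ρ' π' P' t)) := by
    rw [← mul_sub, Real.norm_eq_abs, abs_mul, abs_of_nonneg (pow_nonneg hγ0 t), mul_left_comm]
    exact mul_le_mul_of_nonneg_left (abs_expect_sub_expect_le _ _ hR) (pow_nonneg hγ0 t)
  calc |J R γ ρ π P - J R γ ρ' π' P'|
      = ‖∑' t, (γ ^ t * expect (nu ρ π P t) R - γ ^ t * expect (nu ρ' π' P' t) R)‖ :=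
        congrArg abs ((summable_pow_mul hγ0 hγ1 fun t => abs_expect_le _ hR).tsum_sub
          (summable_pow_mul hγ0 hγ1 fun t => abs_expect_le _ hR)).symm
    _ ≤ 2 * Rmax * ∑' t, γ ^ t * tv (nu ρ π P t) (nu ρ' π' P' t) :=
        tsum_of_norm_bounded
          ((summable_pow_mul hγ0 hγ1 fun t => abs_tv_le_one _ _).hasSum.mul_left _) hgap

/-- The expected one-step error of the model `Phat` along its own rollout from time `t`, which is
the `ε^m_{t+1}` of the theorem: the index is shifted so that it starts at `0`. -/
def modelError (ρ : PMF S) (π : S → PMF A) (Phat P : S × A → PMF S) (t : ℕ) : ℝ :=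
  expect (nu ρ π Phat t) fun sa => tv (Phat sa) (P sa)

variable (ρ : PMF S) (π : S → PMF A) (Phat P : S × A → PMF S)

theorem abs_modelError_le_one (t : ℕ) : |modelError ρ π Phat P t| ≤ 1 :=
  abs_expect_le _ fun _ => abs_tv_le_one _ _

theorem tv_nu_succ_le (t : ℕ) :
    tv (nu ρ π Phat (t + 1)) (nu ρ π P (t + 1)) ≤
      modelError ρ π Phat P t + tv (nu ρ π Phat t) (nu ρ π P t) := by
  refine (tv_bind_le _ _ _ _).trans (add_le_add_left ?_ _)
  exact expect_mono _ (summable_toReal_mul _ fun _ => abs_tv_le_one _ _)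
    (summable_toReal_mul _ fun _ => abs_tv_le_one _ _) fun _ => tv_bind_right_le _ _ _

theorem tsum_pow_mul_tv_nu_le (hγ0 : 0 ≤ γ) (hγ1 : γ < 1) :
    ∑' t, γ ^ t * tv (nu ρ π Phat t) (nu ρ π P t) ≤
      (∑' t, γ ^ (t + 1) * modelError ρ π Phat P t) / (1 - γ) := by
  have hmodel : Summable fun t => γ ^ (t + 1) * modelError ρ π Phat P t := by
    simpa only [pow_succ', mul_assoc] using
      (summable_pow_mul hγ0 hγ1 (abs_modelError_le_one ρ π Phat P)).mul_left γ
  have hinit : tv (nu ρ π Phat 0) (nu ρ π P 0) = 0 := tv_self _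
  rw [le_div_iff₀' (sub_pos.2 hγ1)]
  simpa only [hinit, zero_add] using one_sub_mul_tsum_pow_mul_le hγ0
    (summable_pow_mul hγ0 hγ1 fun t => abs_tv_le_one _ _) hmodel (tv_nu_succ_le ρ π Phat P)

theorem true_return_lower_bound_general (hR : ∀ sa, |R sa| ≤ Rmax) (hγ0 : 0 ≤ γ) (hγ1 : γ < 1) :
    |J R γ ρ π Phat - J R γ ρ π P| ≤
      2 * Rmax / (1 - γ) * ∑' t, γ ^ (t + 1) * modelError ρ π Phat P t := by
  have hRmax : 0 ≤ Rmax := (abs_nonneg _).trans (abs_expect_le (nu ρ π P 0) hR)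
  calc |J R γ ρ π Phat - J R γ ρ π P|
      ≤ 2 * Rmax * ∑' t, γ ^ t * tv (nu ρ π Phat t) (nu ρ π P t) :=
        abs_J_sub_J_le hR hγ0 hγ1 ρ ρ π π Phat P
    _ ≤ 2 * Rmax * ((∑' t, γ ^ (t + 1) * modelError ρ π Phat P t) / (1 - γ)) := by
        gcongr
        exact tsum_pow_mul_tv_nu_le ρ π Phat P hγ0 hγ1
    _ = 2 * Rmax / (1 - γ) * ∑' t, γ ^ (t + 1) * modelError ρ π Phat P t := by ring

end ModelError

/-- The true return is lower-bounded by the model return minus the error term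
`C(P̂, π) = (2·R_max/(1-γ)²)·((2-γ)·ε_π + (1-γ)·Σ_{t≥1} γ^t·ε_t^m)`. -/
theorem true_return_lower_bound {S A : Type*} [Countable S] [Countable A]
    (P Phat : S × A → PMF S) (πD π : S → PMF A)
    (R : S × A → ℝ) (Rmax : ℝ) (hR : ∀ sa : S × A, |R sa| ≤ Rmax)
    (γ : ℝ) (hγ0 : 0 ≤ γ) (hγ1 : γ < 1) (ρ0 : PMF S)
    (επ : ℝ) (hεπ : επ = ⨆ s : S, tv (πD s) (π s))
    (εm : ℕ → ℝ)
    (hεm : ∀ t : ℕ, εm (t + 1) =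
      ∑' sa : S × A, ((nu ρ0 π Phat t) sa).toReal * tv (Phat sa) (P sa)) :
    J R γ ρ0 π P ≥
      J R γ ρ0 π Phat -
        2 * Rmax / (1 - γ) ^ 2 *
          ((2 - γ) * επ + (1 - γ) * ∑' t : ℕ, γ ^ (t + 1) * εm (t + 1)) := by
  have hRmax : 0 ≤ Rmax := (abs_nonneg _).trans (abs_expect_le (nu ρ0 π P 0) hR)
  have hεπ_nonneg : 0 ≤ επ := hεπ ▸ Real.iSup_nonneg fun s => tv_nonneg _ _
  have hγ1' : 0 < 1 - γ := sub_pos.2 hγ1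
  have hγ2 : 0 ≤ 2 - γ := by linarith
  have hpolicy : 0 ≤ 2 * Rmax / (1 - γ) ^ 2 * ((2 - γ) * επ) := by positivity
  have hεm' (t : ℕ) : εm (t + 1) = modelError ρ0 π Phat P t := hεm t
  have hmodel : |J R γ ρ0 π Phat - J R γ ρ0 π P| ≤
      2 * Rmax / (1 - γ) * ∑' t : ℕ, γ ^ (t + 1) * εm (t + 1) := by
    simpa only [hεm'] using true_return_lower_bound_general ρ0 π Phat P hR hγ0 hγ1
  have hcancel : 2 * Rmax / (1 - γ) ^ 2 * (1 - γ) = 2 * Rmax / (1 - γ) := by field_simp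
  rw [mul_add, ← mul_assoc _ (1 - γ), hcancel]
  linarith [le_abs_self (J R γ ρ0 π Phat - J R γ ρ0 π P)]
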